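/- Let K > 1 and ε ∈ (0,1). Let (Fₙ, vₙ) be a sequence of pairs where each Fₙ ⊆ ℝP¹ is a finite set containing the points −1, 0 and ∞, and each vₙ : Fₙ → ℝP¹ is an increasing (K,ε)-quasi-symmetric map fixing −1, 0 and ∞. Suppose that for every x ∈ ℝP¹ there exists a sequence (xₙ) with xₙ ∈ Fₙ and xₙ → x. Then there exist a subsequence (F_{n_k}, v_{n_k}) and an orientation-preserving homeomorphism u : ℝP¹ → ℝP¹ fixing −1, 0 and ∞ such that whenever x_k ∈ F_{n_k} and x_k → x, one has v_{n_k}(x_k) → u(x). -/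

import Mathlib

/-! Only the quadruples `(a, b, c, ∞)` are needed. An increasing map fixing `0` and `∞` is
real-valued and monotone on the finite points, and for almost equally spaced `a < b < c` the
increments of `vₙ` over `[a, b]` and `[b, c]` are comparable with constant `K` (`rv_qs`).

Approximate each rational `q` by points of `Fₙ`. Comparability, starting from the values at `-1`
and `0`, bounds the values of `vₙ` at the approximants of each `q` (`bdd_of_mid`), so a
subsequence converges at all rationals (`exists_subseq`) to a monotone `g : ℚ → ℝ` with comparable
increments over adjacent intervals of equal length (`RatQS`). Such a `g` is strictly increasing
(`RatQS.strictMono`), unbounded on both sides (`RatQS.exists_gt`, `RatQS.exists_lt`) and has no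
jumps (`RatQS.no_jump`), hence extends to an increasing homeomorphism `u` of `ℝ`
(`RatQS.exists_orderIso`). Monotonicity of the `vₙ` squeezes `vₙ (xₙ)` between the values at
approximants of nearby rationals, which gives convergence along every sequence `xₙ → x`, including
`x = ∞`. -/

/- ℝP¹ = ℝ ∪ {∞} (one-point compactification), cross-ratio, cyclic order,
   discrete quasi-symmetric maps. -/

noncomputable section
open Set

/-- The real value of a point of `ℝP¹ = ℝ ∪ {∞}` (junk value `0` at `∞`). -/
def rv (x : OnePoint ℝ) : ℝ := Option.getD x 0

open Classical in
/-- Cross-ratio `cr(a,b,c,d) = ((a−b)(c−d))/((a−d)(c−b))` on `ℝP¹ = ℝ ∪ {∞}`,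
extended by the usual limiting conventions when one point is `∞`; in particular
`cr(−1,0,1,∞) = −1`. -/
def crossRatio (a b c d : OnePoint ℝ) : ℝ :=
  if a = OnePoint.infty then (rv c - rv d) / (rv c - rv b)
  else if b = OnePoint.infty then (rv c - rv d) / (rv a - rv d)
  else if c = OnePoint.infty then (rv a - rv b) / (rv a - rv d)
  else if d = OnePoint.infty then (rv a - rv b) / (rv c - rv b)
  else ((rv a - rv b) * (rv c - rv d)) / ((rv a - rv d) * (rv c - rv b))

/-- `a, b, c, d` are pairwise distinct. -/
def Distinct4 (a b c d : OnePoint ℝ) : Prop :=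
  a ≠ b ∧ a ≠ c ∧ a ≠ d ∧ b ≠ c ∧ b ≠ d ∧ c ≠ d

/-- The closed arc of `ℝP¹ = ℝ ∪ {∞}` from `x` to `y` in the counterclockwise
(increasing) direction, wrapping through `∞`. -/
def arcCcw (x y : OnePoint ℝ) : Set (OnePoint ℝ) :=
  {z | ∃ a b c : ℝ, x = (a : OnePoint ℝ) ∧ y = (b : OnePoint ℝ) ∧ z = (c : OnePoint ℝ) ∧
        ((a ≤ b ∧ a ≤ c ∧ c ≤ b) ∨ (b < a ∧ (a ≤ c ∨ c ≤ b)))} ∪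
  {z | z = OnePoint.infty ∧
        (x = OnePoint.infty ∨ y = OnePoint.infty ∨
         ∃ a b : ℝ, x = (a : OnePoint ℝ) ∧ y = (b : OnePoint ℝ) ∧ b < a)} ∪
  {z | ∃ a c : ℝ, x = (a : OnePoint ℝ) ∧ y = OnePoint.infty ∧ z = (c : OnePoint ℝ) ∧ a ≤ c} ∪
  {z | ∃ b c : ℝ, x = OnePoint.infty ∧ y = (b : OnePoint ℝ) ∧ z = (c : OnePoint ℝ) ∧ c ≤ b}

/-- The standard cyclic betweenness on `ℝP¹`: `b` lies on the closed
counterclockwise arc from `a` to `c`. -/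
def CBtw (a b c : OnePoint ℝ) : Prop := b ∈ arcCcw a c

/-- `f` weakly preserves the standard cyclic order on the subset `F` of `ℝP¹`
(an "increasing" map). -/
def IncreasingOn (F : Set (OnePoint ℝ)) (f : OnePoint ℝ → OnePoint ℝ) : Prop :=
  ∀ a ∈ F, ∀ b ∈ F, ∀ c ∈ F, CBtw a b c → CBtw (f a) (f b) (f c)

/-- `f` weakly preserves the standard cyclic order of `ℝP¹`. -/
def CyclicMono (f : OnePoint ℝ → OnePoint ℝ) : Prop :=
  ∀ a b c : OnePoint ℝ, CBtw a b c → CBtw (f a) (f b) (f c)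

/-- `v` is `(K,ε)`-quasi-symmetric on the (finite) set `F`: it is increasing on `F`
and sends 4-tuples of points of `F` in `ε`-symmetric position
(`cr ∈ [−1−ε, −1+ε]`) to 4-tuples with cross-ratio in `[−K, −1/K]`. -/
def IsQSOn (K ε : ℝ) (F : Set (OnePoint ℝ)) (v : OnePoint ℝ → OnePoint ℝ) : Prop :=
  IncreasingOn F v ∧
  ∀ a ∈ F, ∀ b ∈ F, ∀ c ∈ F, ∀ d ∈ F, Distinct4 a b c d →
    crossRatio a b c d ∈ Set.Icc (-1 - ε) (-1 + ε) →
    crossRatio (v a) (v b) (v c) (v d) ∈ Set.Icc (-K) (-1 / K)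

/-! ### Compactness of discrete quasi-symmetric data on the line -/

/-- If `h (n - 1)` and `h n` are bounded sequences, comparability of increments bounds `h (n + 1)`,
and symmetrically to the left; so boundedness spreads from `-1` and `0` to all integers, and by
monotonicity to all rationals. -/
lemma bdd_of_mid {K : ℝ} (h : ℚ → ℕ → ℝ)
    (hmono : ∀ p q, p < q → ∀ᶠ n in Filter.atTop, h p n ≤ h q n)
    (hmid : ∀ q d, 0 < d → ∀ᶠ n in Filter.atTop,
      h q n - h (q - d) n ≤ K * (h (q + d) n - h q n) ∧
      h (q + d) n - h q n ≤ K * (h q n - h (q - d) n))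
    (hm1 : ∀ n, h (-1) n = -1) (h0 : ∀ n, h 0 n = 0) (q : ℚ) :
    ∃ B, ∀ᶠ n in Filter.atTop, |h q n| ≤ B := by
  -- a single step of the induction: two bounded sequences bound the reflected one
  have key : ∀ (x y z : ℕ → ℝ), (∃ B, ∀ᶠ n in Filter.atTop, |x n| ≤ B) →
      (∃ B, ∀ᶠ n in Filter.atTop, |y n| ≤ B) →
      (∀ᶠ n in Filter.atTop, |z n - y n| ≤ |K| * |y n - x n|) →
      ∃ B, ∀ᶠ n in Filter.atTop, |z n| ≤ B := by
    rintro x y z ⟨A, hA⟩ ⟨B, hB⟩ hz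
    refine ⟨B + |K| * (B + A), ?_⟩
    filter_upwards [hA, hB, hz] with n h1 h2 h3
    have h4 : |y n - x n| ≤ B + A := (abs_sub _ _).trans (add_le_add h2 h1)
    have h5 := mul_le_mul_of_nonneg_left h4 (abs_nonneg K)
    have h6 : |z n| ≤ |z n - y n| + |y n| := by
      simpa using abs_add_le (z n - y n) (y n)
    linarith
  have habs : ∀ a b : ℝ, 0 ≤ b → b ≤ K * a → |b| ≤ |K| * |a| := by
    intro a b hb hab
    rw [← abs_mul, abs_of_nonneg hb]
    exact hab.trans (le_abs_self _)
  have up : ∀ n : ℕ, (∃ B, ∀ᶠ k in Filter.atTop, |h ((n : ℚ) - 1) k| ≤ B) ∧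
      (∃ B, ∀ᶠ k in Filter.atTop, |h (n : ℚ) k| ≤ B) := by
    intro n
    induction n with
    | zero =>
      exact ⟨⟨1, by simp [hm1]⟩, ⟨0, by simp [h0]⟩⟩
    | succ n ih =>
      have e : ((n + 1 : ℕ) : ℚ) - 1 = n := by push_cast; ring
      rw [e]
      refine ⟨ih.2, key _ _ _ ih.1 ih.2 ?_⟩
      filter_upwards [hmid n 1 one_pos, hmono n (n + 1) (by linarith)] with k hk hk'
      push_cast
      exact habs _ _ (by linarith) hk.2
  have down : ∀ n : ℕ, (∃ B, ∀ᶠ k in Filter.atTop, |h (-(n : ℚ)) k| ≤ B) ∧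
      (∃ B, ∀ᶠ k in Filter.atTop, |h (-(n : ℚ) - 1) k| ≤ B) := by
    intro n
    induction n with
    | zero =>
      exact ⟨⟨0, by simp [h0]⟩, ⟨1, by simp [hm1]⟩⟩
    | succ n ih =>
      have e : -((n + 1 : ℕ) : ℚ) = -n - 1 := by push_cast; ring
      rw [e]
      refine ⟨ih.2, key _ _ _ ih.1 ih.2 ?_⟩
      filter_upwards [hmid (-n - 1) 1 one_pos, hmono (-n - 1 - 1) (-n - 1) (by linarith)]
        with k hk hk'
      rw [abs_sub_comm (h (-(n : ℚ) - 1 - 1) k), abs_sub_comm (h (-(n : ℚ) - 1) k) (h (-(n : ℚ)) k)]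
      have := hk.1
      rw [show -(n : ℚ) - 1 + 1 = -n by ring] at this
      exact habs _ _ (by linarith) this
  obtain ⟨N, hN⟩ := exists_nat_gt |q|
  obtain ⟨A, hA⟩ := (up N).2
  obtain ⟨B, hB⟩ := (down N).1
  have h1 := abs_lt.1 hN
  refine ⟨max A B, ?_⟩
  filter_upwards [hA, hB, hmono _ _ h1.1, hmono _ _ h1.2] with n a1 a2 a3 a4
  rw [abs_le] at a1 a2 ⊢
  constructor
  · linarith [le_max_right A B]
  · linarith [le_max_left A B]

/-- Diagonal extraction over the rationals, by compactness of a countable product of intervals. -/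
lemma exists_subseq (h : ℚ → ℕ → ℝ)
    (hb : ∀ q, ∃ B, ∀ᶠ n in Filter.atTop, |h q n| ≤ B) :
    ∃ φ : ℕ → ℕ, StrictMono φ ∧ ∃ g : ℚ → ℝ,
      ∀ q, Filter.Tendsto (fun k => h q (φ k)) Filter.atTop (nhds (g q)) := by
  have hb' : ∀ q, ∃ B, ∀ n, |h q n| ≤ B := by
    intro q
    obtain ⟨B, hB⟩ := hb q
    obtain ⟨C, hC⟩ := (Filter.isBoundedUnder_of_eventually_le hB).bddAbove_range
    exact ⟨C, fun n => hC ⟨n, rfl⟩⟩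
  choose B hB using hb'
  obtain ⟨g, -, φ, hφ, hg⟩ := (isCompact_univ_pi
    (fun q : ℚ => isCompact_Icc (a := -B q) (b := B q))).tendsto_subseq
    (x := fun n q => h q n) (fun n q _ => abs_le.1 (hB q n))
  exact ⟨φ, hφ, g, fun q => (tendsto_pi_nhds.1 hg) q⟩

/-! ### The limit on the rationals extends to a homeomorphism of the line -/

/-- A monotone function on `ℚ`, normalised at `-1` and `0`, for which the increments over two
adjacent intervals of equal length are comparable with constant `K`. -/
structure RatQS (K : ℝ) (g : ℚ → ℝ) : Prop where
  mono : Monotone g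
  left_le : ∀ q d, 0 < d → g q - g (q - d) ≤ K * (g (q + d) - g q)
  right_le : ∀ q d, 0 < d → g (q + d) - g q ≤ K * (g q - g (q - d))
  neg_one : g (-1) = -1
  zero : g 0 = 0

namespace RatQS
variable {K : ℝ} {g : ℚ → ℝ}

/-- A single flat interval would spread by reflection over the whole line, contradicting the
normalisation. -/
lemma strictMono (H : RatQS K g) : StrictMono g := by
  intro a b hab
  refine lt_of_le_of_ne (H.mono hab.le) fun heq => ?_
  obtain ⟨d, hd, rfl⟩ : ∃ d, 0 < d ∧ b = a + d := ⟨b - a, sub_pos.2 hab, by ring⟩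
  have up : ∀ n : ℕ, g (a + n * d) = g a ∧ g (a + n * d + d) = g a := by
    intro n
    induction n with
    | zero => simpa using heq.symm
    | succ n ih =>
      have e : a + ((n + 1 : ℕ) : ℚ) * d = a + n * d + d := by push_cast; ring
      rw [e]
      refine ⟨ih.2, ?_⟩
      have h1 := H.right_le (a + n * d + d) d hd
      have h2 := H.mono (show a + n * d + d ≤ a + n * d + d + d by linarith)
      rw [show a + n * d + d - d = a + n * d by ring, ih.1, ih.2] at h1
      rw [ih.2] at h2
      linarith
  have down : ∀ n : ℕ, g (a - n * d) = g a ∧ g (a - n * d + d) = g a := by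
    intro n
    induction n with
    | zero => simpa using heq.symm
    | succ n ih =>
      have e : a - ((n + 1 : ℕ) : ℚ) * d = a - n * d - d := by push_cast; ring
      rw [e, sub_add_cancel]
      refine ⟨?_, ih.1⟩
      have h1 := H.left_le (a - n * d) d hd
      have h2 := H.mono (show a - n * d - d ≤ a - n * d by linarith)
      rw [ih.1, ih.2] at h1
      rw [ih.1] at h2
      linarith
  obtain ⟨N, hN⟩ := exists_nat_gt ((|a| + 1) / d)
  rw [div_lt_iff₀ hd] at hN
  have l1 := H.mono (show a - N * d ≤ -1 by linarith [le_abs_self a])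
  have l2 := H.mono (show (0 : ℚ) ≤ a + N * d by linarith [neg_abs_le a])
  rw [(down N).1, H.neg_one] at l1
  rw [(up N).1, H.zero] at l2
  linarith

/-- The reflected map, renormalised so as to fix `-1`. -/
lemma reflect (H : RatQS K g) : RatQS K (fun q => -g (-q) / g 1) := by
  have h1 : 0 < g 1 := by simpa [H.zero] using H.strictMono (zero_lt_one : (0 : ℚ) < 1)
  refine ⟨?_, ?_, ?_, ?_, ?_⟩
  · intro p q hpq
    have := H.mono (neg_le_neg hpq)
    have h2 : -g (-p) ≤ -g (-q) := by linarith
    exact div_le_div_of_nonneg_right h2 h1.le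
  · intro q d hd
    have := H.right_le (-q) d hd
    rw [← sub_div, ← sub_div, ← mul_div_assoc]
    refine div_le_div_of_nonneg_right ?_ h1.le
    rw [show -(q - d) = -q + d by ring, show -(q + d) = -q - d by ring]
    linarith
  · intro q d hd
    have := H.left_le (-q) d hd
    rw [← sub_div, ← sub_div, ← mul_div_assoc]
    refine div_le_div_of_nonneg_right ?_ h1.le
    rw [show -(q - d) = -q + d by ring, show -(q + d) = -q - d by ring]
    linarith
  · simp only [neg_neg]
    rw [neg_div, div_self h1.ne']
  · simp [H.zero]

/-- For `q ≥ 1` the increment of `g` from `q` to `2q` is at least `(g q - g 0) / K ≥ g 1 / K`, so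
repeated doubling makes `g` unbounded. -/
lemma exists_gt (H : RatQS K g) (hK : 0 < K) (R : ℝ) : ∃ q, R < g q := by
  by_contra! hR
  have h1 : 0 < g 1 := by simpa [H.zero] using H.strictMono (zero_lt_one : (0 : ℚ) < 1)
  have step : ∀ q, 1 ≤ q → g q + g 1 / K ≤ g (q + q) := by
    intro q hq
    have a := H.left_le q q (by linarith)
    have b := H.mono hq
    rw [sub_self, H.zero, sub_zero] at a
    have : g 1 / K ≤ g (q + q) - g q := by
      rw [div_le_iff₀ hK]; linarith
    linarith
  have all : ∀ n : ℕ, ∃ q, 1 ≤ q ∧ n * (g 1 / K) ≤ g q := by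
    intro n
    induction n with
    | zero => exact ⟨1, le_rfl, by simpa using h1.le⟩
    | succ n ih =>
      obtain ⟨q, hq, h⟩ := ih
      refine ⟨q + q, by linarith, ?_⟩
      push_cast
      linarith [step q hq]
  obtain ⟨N, hN⟩ := exists_nat_gt (R / (g 1 / K))
  rw [div_lt_iff₀ (by positivity)] at hN
  obtain ⟨q, -, hq⟩ := all N
  linarith [hR q]

lemma exists_lt (H : RatQS K g) (hK : 0 < K) (R : ℝ) : ∃ q, g q < R := by
  have h1 : 0 < g 1 := by simpa [H.zero] using H.strictMono (zero_lt_one : (0 : ℚ) < 1)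
  obtain ⟨q, hq⟩ := H.reflect.exists_gt hK (-R / g 1)
  refine ⟨-q, ?_⟩
  have := (div_lt_div_iff_of_pos_right h1).1 hq
  linarith

/-- No jumps: a jump of size `η` at `x` would be comparable to the increment of `g` over an
adjacent interval to the left of `x`, whereas such increments tend to `0`. -/
lemma no_jump (H : RatQS K g) (hK : 0 < K) (x : ℝ) {η : ℝ} (hη : 0 < η) :
    ∃ p q : ℚ, (p : ℝ) < x ∧ x < q ∧ g q - g p < η := by
  by_contra! hJ
  obtain ⟨q₀, hq₀⟩ := exists_rat_gt x
  obtain ⟨p₁, hp₁⟩ := exists_rat_lt x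
  set S : Set ℝ := g '' {p : ℚ | (p : ℝ) < x}
  have hne : S.Nonempty := ⟨_, p₁, hp₁, rfl⟩
  have hbd : BddAbove S := by
    refine ⟨g q₀, ?_⟩
    rintro _ ⟨p, hp, rfl⟩
    have hp' : (p : ℝ) < x := hp
    exact H.mono (by exact_mod_cast (hp'.trans hq₀).le)
  obtain ⟨_, ⟨a, ha, rfl⟩, hlt⟩ := exists_lt_of_lt_csSup hne
    (show sSup S - η / K < sSup S by linarith [div_pos hη hK])
  have ha' : (a : ℝ) < x := ha
  -- `b` in the right half of `(a, x)`, so that the reflection of `a` in `b` lies beyond `x`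
  obtain ⟨b, hb1, hb2⟩ := exists_rat_btwn (show ((a : ℝ) + x) / 2 < x by linarith)
  have hab : (a : ℝ) < b := by linarith
  have hab' : a < b := by exact_mod_cast hab
  have h1 := H.right_le b (b - a) (sub_pos.2 hab')
  rw [sub_sub_cancel] at h1
  have h2 := hJ b (b + (b - a)) hb2 (by push_cast; linarith)
  have h3 : g b ≤ sSup S := le_csSup hbd ⟨b, hb2, rfl⟩
  have h4 : g b - g a < η / K := by linarith
  rw [lt_div_iff₀ hK] at h4
  linarith

/-- The limit on `ℚ` extends to an increasing bijection of `ℝ`. -/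
lemma exists_orderIso (H : RatQS K g) (hK : 0 < K) :
    ∃ u : ℝ ≃o ℝ, ∀ q : ℚ, u q = g q := by
  let S : ℝ → Set ℝ := fun x => g '' {p : ℚ | (p : ℝ) < x}
  let w : ℝ → ℝ := fun x => sSup (S x)
  have hup : ∀ (x : ℝ) (q : ℚ), x < q → g q ∈ upperBounds (S x) := by
    rintro x q hq _ ⟨p, hp, rfl⟩
    have hp' : (p : ℝ) < x := hp
    exact H.mono (by exact_mod_cast (hp'.trans hq).le)
  have hbd : ∀ x, BddAbove (S x) := fun x => by
    obtain ⟨q, hq⟩ := exists_rat_gt x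
    exact ⟨_, hup x q hq⟩
  have hne : ∀ x, (S x).Nonempty := fun x => by
    obtain ⟨q, hq⟩ := exists_rat_lt x
    exact ⟨_, q, hq, rfl⟩
  have lo : ∀ (x : ℝ) (q : ℚ), (q : ℝ) < x → g q ≤ w x := fun x q hq =>
    le_csSup (hbd x) ⟨q, hq, rfl⟩
  have hi : ∀ (x : ℝ) (q : ℚ), x < q → w x ≤ g q := fun x q hq =>
    csSup_le (hne x) (hup x q hq)
  have hval : ∀ q : ℚ, w q = g q := by
    intro q
    refine eq_of_forall_dist_le fun η hη => ?_
    obtain ⟨p, r, hp, hr, hpr⟩ := H.no_jump hK q hη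
    rw [Real.dist_eq, abs_le]
    have a1 := lo q p hp
    have a2 := hi q r hr
    have a3 := H.mono (show p ≤ q by exact_mod_cast hp.le)
    have a4 := H.mono (show q ≤ r by exact_mod_cast hr.le)
    constructor <;> linarith
  have hsm : StrictMono w := by
    intro x y hxy
    obtain ⟨p, hp1, hp2⟩ := exists_rat_btwn hxy
    obtain ⟨q, hq1, hq2⟩ := exists_rat_btwn hp2
    calc w x ≤ g p := hi x p hp1
      _ < g q := H.strictMono (by exact_mod_cast hq1)
      _ ≤ w y := lo y q hq2
  have hcont : Continuous w := by
    rw [Metric.continuous_iff']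
    intro x η hη
    obtain ⟨p, r, hp, hr, hpr⟩ := H.no_jump hK x hη
    filter_upwards [Ioo_mem_nhds hp hr] with y hy
    have a1 := lo x p hp
    have a2 := hi x r hr
    have a3 := lo y p hy.1
    have a4 := hi y r hy.2
    rw [Real.dist_eq, abs_lt]
    constructor <;> linarith
  have htop : Filter.Tendsto w Filter.atTop Filter.atTop :=
    Filter.tendsto_atTop_atTop_of_monotone hsm.monotone fun b => by
      obtain ⟨q, hq⟩ := H.exists_gt hK b
      exact ⟨q, by rw [hval]; exact hq.le⟩
  have hbot : Filter.Tendsto w Filter.atBot Filter.atBot :=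
    Filter.tendsto_atBot_atBot_of_monotone hsm.monotone fun b => by
      obtain ⟨q, hq⟩ := H.exists_lt hK b
      exact ⟨q, by rw [hval]; exact hq.le⟩
  exact ⟨hsm.orderIsoOfSurjective w (hcont.surjective htop hbot), fun q => hval q⟩

end RatQS

/-! ### Coordinates on the projective line -/

@[simp] lemma rv_coe (x : ℝ) : rv (x : OnePoint ℝ) = x := rfl

lemma coe_rv {x : OnePoint ℝ} (hx : x ≠ OnePoint.infty) : ((rv x : ℝ) : OnePoint ℝ) = x := by
  induction x using OnePoint.rec with
  | infty => exact absurd rfl hx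
  | coe x => rfl

lemma cbtw_coe_coe_infty {x y : ℝ} : CBtw x y OnePoint.infty ↔ x ≤ y := by
  simp [CBtw, arcCcw]

lemma cbtw_infty_coe_coe {x y : ℝ} : CBtw OnePoint.infty x y ↔ x ≤ y := by
  simp [CBtw, arcCcw]

lemma not_cbtw_infty_coe_infty {x : ℝ} : ¬ CBtw OnePoint.infty x OnePoint.infty := by
  simp [CBtw, arcCcw]

lemma cyclicMono_map (u : ℝ ≃o ℝ) : CyclicMono (OnePoint.map u) := by
  intro a b c h
  induction a using OnePoint.rec <;> induction b using OnePoint.rec <;>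
    induction c using OnePoint.rec <;> simpa [CBtw, arcCcw] using h

lemma tendsto_infty_iff_abs {x : ℕ → OnePoint ℝ} :
    Filter.Tendsto x Filter.atTop (nhds OnePoint.infty) ↔
      ∀ R : ℝ, ∀ᶠ k in Filter.atTop, x k ≠ OnePoint.infty → R < |rv (x k)| := by
  rw [OnePoint.hasBasis_nhds_infty.tendsto_right_iff]
  constructor
  · intro h R
    filter_upwards [h (Metric.closedBall 0 R)
      ⟨Metric.isClosed_closedBall, isCompact_closedBall 0 R⟩] with k hk hne
    rcases hk with ⟨r, hr, hrk⟩ | hk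
    · rw [← hrk, rv_coe]
      simpa using hr
    · exact absurd hk hne
  · rintro h s ⟨-, hs⟩
    obtain ⟨R, hR⟩ := hs.isBounded.subset_closedBall 0
    filter_upwards [h R] with k hk
    by_cases hne : x k = OnePoint.infty
    · exact Or.inr hne
    · refine Or.inl ⟨rv (x k), fun hmem => ?_, coe_rv hne⟩
      have := hR hmem
      rw [mem_closedBall_zero_iff, Real.norm_eq_abs] at this
      linarith [hk hne]

lemma tendsto_coe_iff_rv {x : ℕ → OnePoint ℝ} {y : ℝ} :
    Filter.Tendsto x Filter.atTop (nhds (y : OnePoint ℝ)) ↔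
      (∀ᶠ k in Filter.atTop, x k ≠ OnePoint.infty) ∧
        Filter.Tendsto (fun k => rv (x k)) Filter.atTop (nhds y) := by
  constructor
  · intro h
    refine ⟨h.eventually_ne (OnePoint.coe_ne_infty y), ?_⟩
    have : Filter.Tendsto rv (nhds (y : OnePoint ℝ)) (nhds y) := by
      rw [OnePoint.nhds_coe_eq, Filter.tendsto_map'_iff]
      exact Filter.tendsto_id
    exact this.comp h
  · rintro ⟨h1, h2⟩
    refine ((OnePoint.continuous_coe.tendsto y).comp h2).congr' ?_
    filter_upwards [h1] with k hk
    exact coe_rv hk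

/-! ### Real form of the quasi-symmetric condition -/

section Real
variable {K ε : ℝ} {F : Set (OnePoint ℝ)} {v : OnePoint ℝ → OnePoint ℝ}

/-- An increasing map fixing `0` and `∞` sends no finite point to `∞`. -/
lemma map_coe_ne_infty (hinc : IncreasingOn F v)
    (h0 : ((0 : ℝ) : OnePoint ℝ) ∈ F)
    (hi : OnePoint.infty ∈ F)
    (f0 : v ((0 : ℝ) : OnePoint ℝ) = ((0 : ℝ) : OnePoint ℝ))
    (fi : v OnePoint.infty = OnePoint.infty) {x : ℝ} (hx : (x : OnePoint ℝ) ∈ F) :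
    v x ≠ OnePoint.infty := by
  intro hv
  rcases le_total x 0 with h | h
  · have := hinc _ hx _ h0 _ hi (cbtw_coe_coe_infty.2 h)
    rw [hv, f0, fi] at this
    exact not_cbtw_infty_coe_infty this
  · have := hinc _ hi _ h0 _ hx (cbtw_infty_coe_coe.2 h)
    rw [hv, f0, fi] at this
    exact not_cbtw_infty_coe_infty this

lemma rv_mono (hinc : IncreasingOn F v) (hi : OnePoint.infty ∈ F)
    (fi : v OnePoint.infty = OnePoint.infty)
    (hne : ∀ x : ℝ, (x : OnePoint ℝ) ∈ F → v x ≠ OnePoint.infty)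
    {x y : ℝ} (hx : (x : OnePoint ℝ) ∈ F) (hy : (y : OnePoint ℝ) ∈ F) (hxy : x ≤ y) :
    rv (v x) ≤ rv (v y) := by
  have := hinc _ hi _ hx _ hy (cbtw_infty_coe_coe.2 hxy)
  rw [fi, ← coe_rv (hne x hx), ← coe_rv (hne y hy)] at this
  exact cbtw_infty_coe_coe.1 this

/-- The quasi-symmetric condition for quadruples `(a, b, c, ∞)`. -/
lemma rv_qs (hK : 1 < K) (hqs : IsQSOn K ε F v) (hi : OnePoint.infty ∈ F)
    (fi : v OnePoint.infty = OnePoint.infty)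
    (hne : ∀ x : ℝ, (x : OnePoint ℝ) ∈ F → v x ≠ OnePoint.infty)
    {a b c : ℝ} (ha : (a : OnePoint ℝ) ∈ F) (hb : (b : OnePoint ℝ) ∈ F)
    (hc : (c : OnePoint ℝ) ∈ F) (hab : a < b) (hbc : b < c)
    (hr : (b - a) / (c - b) ∈ Set.Icc (1 - ε) (1 + ε)) :
    rv (v b) - rv (v a) ≤ K * (rv (v c) - rv (v b)) ∧
      rv (v c) - rv (v b) ≤ K * (rv (v b) - rv (v a)) := by
  have e : (a - b) / (c - b) = -((b - a) / (c - b)) := by ring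
  have h := hqs.2 _ ha _ hb _ hc _ hi
    ⟨by simpa using hab.ne, by simpa using (hab.trans hbc).ne, by simp,
      by simpa using hbc.ne, by simp, by simp⟩ (by
        simp only [crossRatio, OnePoint.coe_ne_infty, if_false, if_true, rv_coe, e]
        exact ⟨by linarith [hr.2], by linarith [hr.1]⟩)
  simp only [crossRatio, fi, hne a ha, hne b hb, hne c hc, if_false, if_true] at h
  have m := rv_mono hqs.1 hi fi hne hb hc hbc.le
  set A := rv (v a)
  set B := rv (v b)
  set C := rv (v c)
  have hK0 : 0 < K := by linarith
  have hneg : -1 / K < 0 := div_neg_of_neg_of_pos (by norm_num) hK0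
  have hCB : 0 < C - B := by
    refine lt_of_le_of_ne (by linarith) fun h0 => ?_
    rw [← h0, div_zero] at h
    linarith [h.2]
  have h1 := h.1
  have h2 := h.2
  rw [le_div_iff₀ hCB] at h1
  rw [div_le_div_iff₀ hCB hK0] at h2
  constructor <;> nlinarith

end Real

/-- A sequence of discrete increasing `(K,ε)`-quasi-symmetric maps
`vₙ : Fₙ → ℝP¹` fixing `−1, 0, ∞`, with `Fₙ` asymptotically dense, has a subsequence
converging to an orientation-preserving homeomorphism `u` of `ℝP¹` fixing `−1, 0, ∞`. -/
theorem discrete_qs_compactness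
    (K ε : ℝ) (hK : 1 < K) (hε : ε ∈ Set.Ioo (0 : ℝ) 1)
    (F : ℕ → Set (OnePoint ℝ)) (hF : ∀ n, (F n).Finite)
    (hmem : ∀ n, (((-1 : ℝ) : OnePoint ℝ) ∈ F n ∧ ((0 : ℝ) : OnePoint ℝ) ∈ F n ∧
      OnePoint.infty ∈ F n))
    (v : ℕ → OnePoint ℝ → OnePoint ℝ)
    (hqs : ∀ n, IsQSOn K ε (F n) (v n))
    (hfix : ∀ n, v n ((-1 : ℝ) : OnePoint ℝ) = ((-1 : ℝ) : OnePoint ℝ) ∧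
      v n ((0 : ℝ) : OnePoint ℝ) = ((0 : ℝ) : OnePoint ℝ) ∧
      v n OnePoint.infty = OnePoint.infty)
    (hdense : ∀ x : OnePoint ℝ, ∃ s : ℕ → OnePoint ℝ,
      (∀ n, s n ∈ F n) ∧ Filter.Tendsto s Filter.atTop (nhds x)) :
    ∃ φ : ℕ → ℕ, StrictMono φ ∧
      ∃ u : OnePoint ℝ ≃ₜ OnePoint ℝ, CyclicMono u ∧
        u ((-1 : ℝ) : OnePoint ℝ) = ((-1 : ℝ) : OnePoint ℝ) ∧
        u ((0 : ℝ) : OnePoint ℝ) = ((0 : ℝ) : OnePoint ℝ) ∧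
        u OnePoint.infty = OnePoint.infty ∧
        ∀ x : OnePoint ℝ, ∀ s : ℕ → OnePoint ℝ, (∀ k, s k ∈ F (φ k)) →
          Filter.Tendsto s Filter.atTop (nhds x) →
          Filter.Tendsto (fun k => v (φ k) (s k)) Filter.atTop (nhds (u x)) := by
  classical
  have hK0 : 0 < K := by linarith
  have hne : ∀ n (x : ℝ), (x : OnePoint ℝ) ∈ F n → v n x ≠ OnePoint.infty := fun n x hx =>
    map_coe_ne_infty (hqs n).1 (hmem n).2.1 (hmem n).2.2 (hfix n).2.1
      (hfix n).2.2 hx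
  have hmono : ∀ n (x y : ℝ), (x : OnePoint ℝ) ∈ F n → (y : OnePoint ℝ) ∈ F n → x ≤ y →
      rv (v n x) ≤ rv (v n y) := fun n x y hx hy hxy =>
    rv_mono (hqs n).1 (hmem n).2.2 (hfix n).2.2 (hne n) hx hy hxy
  -- rational points are approximated from the sets `F n`, exactly so at `-1` and `0`
  have hT : ∀ q : ℚ, ∃ t : ℕ → ℝ, (∀ᶠ n in Filter.atTop, (t n : OnePoint ℝ) ∈ F n) ∧
      Filter.Tendsto t Filter.atTop (nhds (q : ℝ)) ∧ (q = -1 → ∀ n, t n = -1) ∧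
      (q = 0 → ∀ n, t n = 0) := by
    intro q
    by_cases h1 : q = -1
    · subst h1
      exact ⟨fun _ => -1, .of_forall fun n => (hmem n).1, by simp, fun _ _ => rfl,
        fun h => by norm_num at h⟩
    by_cases h0 : q = 0
    · subst h0
      exact ⟨fun _ => 0, .of_forall fun n => (hmem n).2.1, by simp, fun h => by norm_num at h,
        fun _ _ => rfl⟩
    obtain ⟨s, hs, hs'⟩ := hdense ((q : ℝ) : OnePoint ℝ)
    obtain ⟨e1, e2⟩ := tendsto_coe_iff_rv.1 hs'
    refine ⟨fun n => rv (s n), ?_, e2, fun h => absurd h h1, fun h => absurd h h0⟩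
    filter_upwards [e1] with n hn
    rw [coe_rv hn]
    exact hs n
  choose t htF htl ht1 ht0 using hT
  let h : ℚ → ℕ → ℝ := fun q n => rv (v n (t q n))
  have hhm : ∀ p q, p < q → ∀ᶠ n in Filter.atTop, h p n ≤ h q n := by
    intro p q hpq
    filter_upwards [htF p, htF q, (htl p).eventually_lt (htl q) (by exact_mod_cast hpq)]
      with n a b c
    exact hmono n _ _ a b c.le
  have hhmid : ∀ q d, 0 < d → ∀ᶠ n in Filter.atTop,
      h q n - h (q - d) n ≤ K * (h (q + d) n - h q n) ∧
      h (q + d) n - h q n ≤ K * (h q n - h (q - d) n) := by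
    intro q d hd
    have hd' : (0 : ℝ) < d := by exact_mod_cast hd
    have l1 : Filter.Tendsto (fun n => (t q n - t (q - d) n) / (t (q + d) n - t q n))
        Filter.atTop (nhds 1) := by
      have := ((htl q).sub (htl (q - d))).div ((htl (q + d)).sub (htl q))
        (by push_cast; simpa using hd'.ne')
      have e : ((q : ℝ) - ((q - d : ℚ) : ℝ)) / (((q + d : ℚ) : ℝ) - q) = 1 := by
        push_cast
        rw [sub_sub_cancel, add_sub_cancel_left, div_self hd'.ne']
      rw [e] at this
      exact this
    filter_upwards [htF q, htF (q - d), htF (q + d),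
      (htl (q - d)).eventually_lt (htl q) (by push_cast; linarith),
      (htl q).eventually_lt (htl (q + d)) (by push_cast; linarith),
      l1.eventually (Icc_mem_nhds (show 1 - ε < 1 by linarith [hε.1])
        (show 1 < 1 + ε by linarith [hε.1]))] with n a1 a2 a3 a4 a5 a6
    exact rv_qs hK (hqs n) (hmem n).2.2 (hfix n).2.2 (hne n) a2 a1 a3 a4 a5 a6
  have hh1 : ∀ n, h (-1) n = -1 := fun n => by
    simp only [h, ht1 (-1) rfl n, (hfix n).1, rv_coe]
  have hh0 : ∀ n, h 0 n = 0 := fun n => by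
    simp only [h, ht0 0 rfl n, (hfix n).2.1, rv_coe]
  obtain ⟨φ, hφ, g, hg⟩ := exists_subseq h (bdd_of_mid h hhm hhmid hh1 hh0)
  have hφt := hφ.tendsto_atTop
  have H : RatQS K g := by
    refine ⟨?_, ?_, ?_, ?_, ?_⟩
    · intro p q hpq
      rcases hpq.eq_or_lt with rfl | hlt
      · exact le_rfl
      · exact le_of_tendsto_of_tendsto (hg p) (hg q) (hφt.eventually (hhm p q hlt))
    · intro q d hd
      exact le_of_tendsto_of_tendsto ((hg q).sub (hg (q - d)))
        (((hg (q + d)).sub (hg q)).const_mul K)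
        ((hφt.eventually (hhmid q d hd)).mono fun _ h => h.1)
    · intro q d hd
      exact le_of_tendsto_of_tendsto ((hg (q + d)).sub (hg q))
        (((hg q).sub (hg (q - d))).const_mul K)
        ((hφt.eventually (hhmid q d hd)).mono fun _ h => h.2)
    · exact tendsto_nhds_unique (hg (-1)) (by simp [hh1])
    · exact tendsto_nhds_unique (hg 0) (by simp [hh0])
  obtain ⟨u, hu⟩ := H.exists_orderIso hK0
  have hum1 : u (-1) = -1 := by simpa [H.neg_one] using hu (-1)
  have hu0 : u 0 = 0 := by simpa [H.zero] using hu 0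
  refine ⟨φ, hφ, u.toHomeomorph.onePointCongr, cyclicMono_map u, ?_, ?_, rfl, ?_⟩
  · exact congrArg OnePoint.some hum1
  · exact congrArg OnePoint.some hu0
  intro x s hs hsx
  induction x using OnePoint.rec with
  | infty =>
    change Filter.Tendsto _ _ (nhds OnePoint.infty)
    rw [tendsto_infty_iff_abs] at hsx ⊢
    intro R
    obtain ⟨q, hq⟩ := H.exists_gt hK0 R
    obtain ⟨p, hp⟩ := H.exists_lt hK0 (-R)
    have hq' := hφt.eventually ((htl q).eventually (gt_mem_nhds (lt_add_one (q : ℝ))))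
    have hp' := hφt.eventually ((htl p).eventually (lt_mem_nhds (sub_one_lt (p : ℝ))))
    filter_upwards [hsx (max (q + 1) (1 - p)), hq', hp', hφt.eventually (htF q),
      hφt.eventually (htF p), (hg q).eventually (lt_mem_nhds hq),
      (hg p).eventually (gt_mem_nhds hp)] with k a1 a2 a3 a4 a5 a6 a7 hinf
    have hsk : s k ≠ OnePoint.infty := fun h => hinf (by rw [h]; exact (hfix _).2.2)
    have a1 := a1 hsk
    have hF' := hs k
    rw [← coe_rv hsk] at hF' ⊢
    have b1 := le_max_left ((q : ℝ) + 1) (1 - p)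
    have b2 := le_max_right ((q : ℝ) + 1) (1 - p)
    rcases le_total 0 (rv (s k)) with h0 | h0
    · rw [abs_of_nonneg h0] at a1
      have := hmono _ _ _ a4 hF' (by linarith)
      exact lt_of_lt_of_le (lt_of_lt_of_le a6 this) (le_abs_self _)
    · rw [abs_of_nonpos h0] at a1
      have := hmono _ _ _ hF' a5 (by linarith)
      exact lt_of_lt_of_le (by linarith) (neg_le_abs _)
  | coe x =>
    change Filter.Tendsto _ _ (nhds ((u x : ℝ) : OnePoint ℝ))
    rw [tendsto_coe_iff_rv] at hsx ⊢
    refine ⟨?_, ?_⟩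
    · filter_upwards [hsx.1] with k hk
      have hF' := hs k
      rw [← coe_rv hk] at hF' ⊢
      exact hne _ _ hF'
    · -- sandwich `s k` between the approximants of two rationals close to `x`
      rw [tendsto_order]
      constructor
      · intro y hy
        have hy' : u.symm y < x := by rwa [u.symm_apply_lt]
        obtain ⟨p, hp1, hp2⟩ := exists_rat_btwn hy'
        rw [u.symm_apply_lt, hu] at hp1
        filter_upwards [hsx.1, ((htl p).comp hφt).eventually_lt hsx.2 hp2,
          hφt.eventually (htF p), (hg p).eventually (lt_mem_nhds hp1)] with k a1 a2 a3 a4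
        have hF' := hs k
        rw [← coe_rv a1] at hF' ⊢
        exact lt_of_lt_of_le a4 (hmono _ _ _ a3 hF' a2.le)
      · intro y hy
        have hy' : x < u.symm y := by rwa [u.lt_symm_apply]
        obtain ⟨p, hp1, hp2⟩ := exists_rat_btwn hy'
        rw [u.lt_symm_apply, hu] at hp2
        filter_upwards [hsx.1, hsx.2.eventually_lt ((htl p).comp hφt) hp1,
          hφt.eventually (htF p), (hg p).eventually (gt_mem_nhds hp2)] with k a1 a2 a3 a4
        have hF' := hs k
        rw [← coe_rv a1] at hF' ⊢
        exact lt_of_le_of_lt (hmono _ _ _ hF' a3 a2.le) a4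

end
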